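/- Let c < 0 with κ = −c, let x, y ∈ D_c^p with y ≠ x, let u ∈ ℝ^p, and define γ(t) = exp_x(tu) and ψ(t) = (1/2) d_H(γ(t), y)². Then ψ is twice differentiable at every t with γ(t) ≠ y, and ψ''(t) ≤ g_c(d_H(γ(t),y)) · ‖u‖_{g,x}², where g_c(s) = √κ·s·coth(√κ·s) for s > 0 (and g_c(0) = 1) and ‖u‖_{g,x} = (2/(1 − κ‖x‖²))‖u‖. -/

import Mathlib

open scoped BigOperators InnerProductSpace RealInnerProductSpace
open Filter MeasureTheory
open scoped ProbabilityTheory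
attribute [local instance] Classical.propDecidable

noncomputable section

/-- Inverse hyperbolic tangent. -/
def artanh (x : ℝ) : ℝ := (1 / 2) * Real.log ((1 + x) / (1 - x))

/-- Inverse hyperbolic cosine. -/
def arcosh (x : ℝ) : ℝ := Real.log (x + Real.sqrt (x ^ 2 - 1))

/-- The Poincaré ball of curvature `c < 0` in dimension `p`. -/
def Dball (c : ℝ) (p : ℕ) : Set (EuclideanSpace ℝ (Fin p)) :=
  {v | -c * ‖v‖ ^ 2 < 1}

/-- Möbius (gyrovector) addition with curvature parameter `c`. -/
def mobiusAdd (c : ℝ) {p : ℕ} (v w : EuclideanSpace ℝ (Fin p)) :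
    EuclideanSpace ℝ (Fin p) :=
  (1 - 2 * c * ⟪v, w⟫_ℝ + c ^ 2 * ‖v‖ ^ 2 * ‖w‖ ^ 2)⁻¹ •
    ((1 - 2 * c * ⟪v, w⟫_ℝ - c * ‖w‖ ^ 2) • v + (1 + c * ‖v‖ ^ 2) • w)

/-- Möbius scalar multiplication with curvature parameter `c`. -/
def mobiusSmul (c lam : ℝ) {p : ℕ} (v : EuclideanSpace ℝ (Fin p)) :
    EuclideanSpace ℝ (Fin p) :=
  if v = 0 then 0 else
    ((1 / Real.sqrt (-c)) * Real.tanh (lam * artanh (Real.sqrt (-c) * ‖v‖)) * ‖v‖⁻¹) • v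

/-- Hyperbolic (Poincaré ball) distance. -/
def dH (c : ℝ) {p : ℕ} (x y : EuclideanSpace ℝ (Fin p)) : ℝ :=
  (2 / Real.sqrt (-c)) * artanh (Real.sqrt (-c) * ‖mobiusAdd c (-x) y‖)

/-- Conformal factor `λ_x = 2 / (1 - κ‖x‖²)`, `κ = -c`. -/
def conf (c : ℝ) {p : ℕ} (x : EuclideanSpace ℝ (Fin p)) : ℝ :=
  2 / (1 - (-c) * ‖x‖ ^ 2)

/-- Riemannian exponential map of the Poincaré ball at `x`. -/
def expMap (c : ℝ) {p : ℕ} (x v : EuclideanSpace ℝ (Fin p)) :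
    EuclideanSpace ℝ (Fin p) :=
  if v = 0 then x else
    mobiusAdd c x
      ((Real.tanh (conf c x * Real.sqrt (-c) * ‖v‖ / 2) / (Real.sqrt (-c) * ‖v‖)) • v)

/-- Riemannian logarithmic map of the Poincaré ball at `x`. -/
def logMap (c : ℝ) {p : ℕ} (x y : EuclideanSpace ℝ (Fin p)) :
    EuclideanSpace ℝ (Fin p) :=
  if y = x then 0 else
    ((2 / conf c x) * (artanh (Real.sqrt (-c) * ‖mobiusAdd c (-x) y‖) / ‖mobiusAdd c (-x) y‖)) •
      mobiusAdd c (-x) y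

/-- The Möbius weighted mean `⊕_j (w_j ⊗_c x_j)` (iterated Möbius sum). -/
def mobiusMean (c : ℝ) {p N : ℕ} (w : Fin N → ℝ) (x : Fin N → EuclideanSpace ℝ (Fin p)) :
    EuclideanSpace ℝ (Fin p) :=
  (List.ofFn fun j => mobiusSmul c (w j) (x j)).foldl (mobiusAdd c) 0

/-- Geodesic convexity in the Poincaré ball. -/
def GeodesicConvex (c : ℝ) {p : ℕ} (U : Set (EuclideanSpace ℝ (Fin p))) : Prop :=
  ∀ x ∈ U, ∀ y ∈ U, ∀ t ∈ Set.Icc (0 : ℝ) 1, expMap c x (t • logMap c x y) ∈ U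

/-- The Riemannian gradient on the Poincaré ball. -/
def gradH (c : ℝ) {p : ℕ} (f : EuclideanSpace ℝ (Fin p) → ℝ) (x : EuclideanSpace ℝ (Fin p)) :
    EuclideanSpace ℝ (Fin p) :=
  ((1 - (-c) * ‖x‖ ^ 2) ^ 2 / 4) • gradient f x

/-- The hyperbolic volume measure on `ℝ^p` (density of the Poincaré metric). -/
def volH (c : ℝ) (p : ℕ) : Measure (EuclideanSpace ℝ (Fin p)) :=
  volume.withDensity fun y => ENNReal.ofReal ((2 / (1 - (-c) * ‖y‖ ^ 2)) ^ p)

/-- Gaussian kernel on the Poincaré ball. -/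
def kernelK (c σ : ℝ) {p : ℕ} (x y : EuclideanSpace ℝ (Fin p)) : ℝ :=
  Real.exp (-(dH c x y) ^ 2 / (2 * σ ^ 2))

/-- Normalized Gaussian mean-shift weights relative to data `xt` at query point `x`. -/
def msWeight (c σ : ℝ) {p N : ℕ} (xt : Fin N → EuclideanSpace ℝ (Fin p))
    (x : EuclideanSpace ℝ (Fin p)) (j : Fin N) : ℝ :=
  kernelK c σ x (xt j) / ∑ k, kernelK c σ x (xt k)

/-- One HypeGBMS (Möbius weighted mean) update. -/
def msUpdate (c σ : ℝ) {p N : ℕ} (xt : Fin N → EuclideanSpace ℝ (Fin p))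
    (x : EuclideanSpace ℝ (Fin p)) : EuclideanSpace ℝ (Fin p) :=
  mobiusMean c (msWeight c σ xt x) xt

/-- Kernel density estimate `f̂` based on the fixed data `xt`. -/
def kdeFin (c σ : ℝ) {p N : ℕ} (xt : Fin N → EuclideanSpace ℝ (Fin p))
    (x : EuclideanSpace ℝ (Fin p)) : ℝ :=
  (1 / (N : ℝ)) * ∑ j, kernelK c σ x (xt j)

/-- Population smoothed density `f_σ`. -/
def popSmooth (c σ : ℝ) {p : ℕ} (f : EuclideanSpace ℝ (Fin p) → ℝ)
    (x : EuclideanSpace ℝ (Fin p)) : ℝ :=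
  ∫ y, kernelK c σ x y * f y ∂(volH c p)

/-- Empirical kernel density estimate from random samples `X`. -/
def empKDE (c σ : ℝ) {p : ℕ} {Ω : Type*} (X : ℕ → Ω → EuclideanSpace ℝ (Fin p))
    (N : ℕ) (ω : Ω) (x : EuclideanSpace ℝ (Fin p)) : ℝ :=
  (1 / (N : ℝ)) * ∑ i ∈ Finset.range N, kernelK c σ x (X i ω)

/-- Set of (Euclidean) critical points of `g` inside `U`. -/
def critSet {p : ℕ} (g : EuclideanSpace ℝ (Fin p) → ℝ)
    (U : Set (EuclideanSpace ℝ (Fin p))) : Set (EuclideanSpace ℝ (Fin p)) :=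
  {x ∈ U | gradient g x = 0}

/-- Hausdorff distance between two subsets of the Poincaré ball w.r.t. `dH`. -/
def hausdH (c : ℝ) {p : ℕ} (A B : Set (EuclideanSpace ℝ (Fin p))) : ℝ :=
  max (⨆ a ∈ A, ⨅ b ∈ B, dH c a b) (⨆ b ∈ B, ⨅ a ∈ A, dH c a b)

/-- The comparison function `g_c(s) = √κ s coth(√κ s)`, with `g_c(0) = 1`. -/
def gcomp (c : ℝ) (s : ℝ) : ℝ :=
  if s = 0 then 1
  else Real.sqrt (-c) * s * (Real.cosh (Real.sqrt (-c) * s) / Real.sinh (Real.sqrt (-c) * s))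

lemma aux_N_pos {p : ℕ} {c : ℝ} (hc : c < 0) (v w : EuclideanSpace ℝ (Fin p))
    (hv : -c * ‖v‖ ^ 2 < 1) (hw : -c * ‖w‖ ^ 2 < 1) :
    0 < 1 - 2 * c * ⟪v, w⟫_ℝ + c ^ 2 * ‖v‖ ^ 2 * ‖w‖ ^ 2 := by
  have h1 := abs_le.1 (abs_real_inner_le_norm v w)
  have hV : 0 ≤ -c * ‖v‖ ^ 2 := by have := sq_nonneg ‖v‖; nlinarith
  have hW : 0 ≤ -c * ‖w‖ ^ 2 := by have := sq_nonneg ‖w‖; nlinarith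
  have h2 : (-c * (‖v‖ * ‖w‖)) ^ 2 < 1 := by
    have : (-c * (‖v‖ * ‖w‖)) ^ 2 = (-c * ‖v‖ ^ 2) * (-c * ‖w‖ ^ 2) := by ring
    rw [this]; nlinarith
  have h3 : -c * (‖v‖ * ‖w‖) < 1 := by nlinarith
  have h4 : 0 < (1 - (-c * (‖v‖ * ‖w‖))) ^ 2 := by
    apply pow_pos; linarith
  nlinarith [mul_le_mul_of_nonneg_left h1.1 (by linarith : 0 ≤ -c)]

lemma aux_norm_mobius {p : ℕ} {c : ℝ} (v w : EuclideanSpace ℝ (Fin p))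
    (hN : 0 < 1 - 2 * c * ⟪v, w⟫_ℝ + c ^ 2 * ‖v‖ ^ 2 * ‖w‖ ^ 2) :
    ‖mobiusAdd c v w‖ ^ 2 = (‖v‖ ^ 2 + 2 * ⟪v, w⟫_ℝ + ‖w‖ ^ 2) /
      (1 - 2 * c * ⟪v, w⟫_ℝ + c ^ 2 * ‖v‖ ^ 2 * ‖w‖ ^ 2) := by
  unfold mobiusAdd
  rw [norm_smul, mul_pow, norm_add_sq_real, norm_smul, norm_smul, mul_pow, mul_pow,
    real_inner_smul_left, real_inner_smul_right]
  simp only [Real.norm_eq_abs, sq_abs]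
  field_simp
  ring

lemma aux_inner_mobius {p : ℕ} {c : ℝ} (v w y : EuclideanSpace ℝ (Fin p)) :
    ⟪mobiusAdd c v w, y⟫_ℝ = ((1 - 2 * c * ⟪v, w⟫_ℝ - c * ‖w‖ ^ 2) * ⟪v, y⟫_ℝ
      + (1 + c * ‖v‖ ^ 2) * ⟪w, y⟫_ℝ) /
      (1 - 2 * c * ⟪v, w⟫_ℝ + c ^ 2 * ‖v‖ ^ 2 * ‖w‖ ^ 2) := by
  unfold mobiusAdd
  rw [real_inner_smul_left, inner_add_left, real_inner_smul_left, real_inner_smul_left]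
  rw [div_eq_inv_mul]

/-- The hyperbolic cosine of the rescaled distance. -/
def auxC (c : ℝ) {p : ℕ} (g y : EuclideanSpace ℝ (Fin p)) : ℝ :=
  ((1 - c * ‖g‖ ^ 2) * (1 - c * ‖y‖ ^ 2) + 4 * c * ⟪g, y⟫_ℝ) /
    ((1 + c * ‖g‖ ^ 2) * (1 + c * ‖y‖ ^ 2))

lemma auxC_sub_one {p : ℕ} {c : ℝ} (g y : EuclideanSpace ℝ (Fin p))
    (hg : -c * ‖g‖ ^ 2 < 1) (hy : -c * ‖y‖ ^ 2 < 1) :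
    auxC c g y = 1 + (-2 * c * ‖g - y‖ ^ 2) / ((1 + c * ‖g‖ ^ 2) * (1 + c * ‖y‖ ^ 2)) := by
  have h1 : 0 < 1 + c * ‖g‖ ^ 2 := by linarith
  have h2 : 0 < 1 + c * ‖y‖ ^ 2 := by linarith
  unfold auxC
  rw [norm_sub_sq_real]
  field_simp
  ring

lemma auxC_one_le {p : ℕ} {c : ℝ} (hc : c < 0) (g y : EuclideanSpace ℝ (Fin p))
    (hg : -c * ‖g‖ ^ 2 < 1) (hy : -c * ‖y‖ ^ 2 < 1) : 1 ≤ auxC c g y := by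
  have h1 : 0 < 1 + c * ‖g‖ ^ 2 := by linarith
  have h2 : 0 < 1 + c * ‖y‖ ^ 2 := by linarith
  rw [auxC_sub_one g y hg hy]
  have h3 : 0 ≤ -2 * c * ‖g - y‖ ^ 2 := mul_nonneg (by linarith) (sq_nonneg _)
  have := div_nonneg h3 (mul_pos h1 h2).le
  linarith

lemma auxC_one_lt {p : ℕ} {c : ℝ} (hc : c < 0) (g y : EuclideanSpace ℝ (Fin p))
    (hg : -c * ‖g‖ ^ 2 < 1) (hy : -c * ‖y‖ ^ 2 < 1) (hne : g ≠ y) : 1 < auxC c g y := by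
  have h1 : 0 < 1 + c * ‖g‖ ^ 2 := by linarith
  have h2 : 0 < 1 + c * ‖y‖ ^ 2 := by linarith
  rw [auxC_sub_one g y hg hy]
  have h0 : 0 < ‖g - y‖ := norm_pos_iff.2 (sub_ne_zero.2 hne)
  have h3 : 0 < -2 * c * ‖g - y‖ ^ 2 := mul_pos (by linarith) (pow_pos h0 2)
  have := div_pos h3 (mul_pos h1 h2)
  linarith

lemma aux_two_artanh (r : ℝ) (h0 : 0 ≤ r) (h1 : r < 1) :
    2 * artanh r = Real.arcosh ((1 + r ^ 2) / (1 - r ^ 2)) := by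
  have h2 : 0 < 1 - r := by linarith
  have h3 : 0 < 1 - r ^ 2 := by nlinarith
  have hs : √(((1 + r ^ 2) / (1 - r ^ 2)) ^ 2 - 1) = 2 * r / (1 - r ^ 2) := by
    rw [Real.sqrt_eq_iff_mul_self_eq]
    · field_simp
      ring
    · have : ((1 + r ^ 2) / (1 - r ^ 2)) ^ 2 - 1 = (2 * r / (1 - r ^ 2)) ^ 2 := by
        field_simp
        ring
      rw [this]; positivity
    · positivity
  unfold artanh Real.arcosh
  rw [hs]
  have : (1 + r) / (1 - r) = (1 + r ^ 2) / (1 - r ^ 2) + 2 * r / (1 - r ^ 2) := by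
    have h4 : 1 - r ^ 2 = (1 - r) * (1 + r) := by ring
    have h5 : 0 < 1 + r := by linarith
    rw [h4]
    field_simp
    ring
  rw [this]; ring

lemma aux_dH {p : ℕ} {c : ℝ} (hc : c < 0) (g y : EuclideanSpace ℝ (Fin p))
    (hg : -c * ‖g‖ ^ 2 < 1) (hy : -c * ‖y‖ ^ 2 < 1) :
    dH c g y = (√(-c))⁻¹ * Real.arcosh (auxC c g y) := by
  have h1 : 0 < 1 + c * ‖g‖ ^ 2 := by linarith
  have h2 : 0 < 1 + c * ‖y‖ ^ 2 := by linarith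
  have hN := aux_N_pos hc (-g) y (by simpa using hg) hy
  have hM := aux_norm_mobius (-g) y hN
  have hsq : (√(-c) * ‖mobiusAdd c (-g) y‖) ^ 2 = -c * ‖mobiusAdd c (-g) y‖ ^ 2 := by
    rw [mul_pow, Real.sq_sqrt (by linarith)]
  simp only [inner_neg_left, norm_neg] at hN hM
  have h1r : 1 - (√(-c) * ‖mobiusAdd c (-g) y‖) ^ 2 =
      (1 + c * ‖g‖ ^ 2) * (1 + c * ‖y‖ ^ 2) /
      (1 - 2 * c * -⟪g, y⟫_ℝ + c ^ 2 * ‖g‖ ^ 2 * ‖y‖ ^ 2) := by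
    rw [hsq, hM, eq_div_iff hN.ne', sub_mul, mul_assoc (-c), div_mul_cancel₀ _ hN.ne']
    ring
  have h2r : 1 + (√(-c) * ‖mobiusAdd c (-g) y‖) ^ 2 =
      ((1 - c * ‖g‖ ^ 2) * (1 - c * ‖y‖ ^ 2) + 4 * c * ⟪g, y⟫_ℝ) /
      (1 - 2 * c * -⟪g, y⟫_ℝ + c ^ 2 * ‖g‖ ^ 2 * ‖y‖ ^ 2) := by
    rw [hsq, hM, eq_div_iff hN.ne', add_mul, mul_assoc (-c), div_mul_cancel₀ _ hN.ne']
    ring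
  have hpos : 0 < 1 - (√(-c) * ‖mobiusAdd c (-g) y‖) ^ 2 := by
    rw [h1r]; positivity
  have h0 : 0 ≤ √(-c) * ‖mobiusAdd c (-g) y‖ := by positivity
  have hlt : √(-c) * ‖mobiusAdd c (-g) y‖ < 1 := by nlinarith
  have := aux_two_artanh _ h0 hlt
  rw [h1r, h2r, div_div_div_cancel_right₀ hN.ne'] at this
  unfold dH auxC
  rw [← this]
  ring

lemma aux_exp {p : ℕ} {c : ℝ} (x u : EuclideanSpace ℝ (Fin p)) (s : ℝ) :
    expMap c x (s • u) = mobiusAdd c x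
      (Real.tanh (conf c x * √(-c) * ‖u‖ * s / 2) • ((√(-c) * ‖u‖)⁻¹ • u)) := by
  unfold expMap
  split_ifs with h
  · rcases smul_eq_zero.1 h with h | h <;> simp [h, mobiusAdd]
  · have hs : s ≠ 0 := fun h' => h (by simp [h'])
    congr 1
    rw [norm_smul, smul_smul, smul_smul, Real.norm_eq_abs]
    congr 1
    rcases lt_or_gt_of_ne hs with h' | h'
    · rw [abs_of_neg h',
        show conf c x * √(-c) * (-s * ‖u‖) / 2 = -(conf c x * √(-c) * ‖u‖ * s / 2) by ring,
        Real.tanh_neg]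
      field_simp
    · rw [abs_of_pos h',
        show conf c x * √(-c) * (s * ‖u‖) / 2 = (conf c x * √(-c) * ‖u‖ * s / 2) by ring]
      field_simp

lemma aux_kw {p : ℕ} {c : ℝ} (hc : c < 0) (x u : EuclideanSpace ℝ (Fin p)) (s : ℝ) :
    ‖Real.tanh (conf c x * √(-c) * ‖u‖ * s / 2) • ((√(-c) * ‖u‖)⁻¹ • u)‖ ^ 2
      = (-c)⁻¹ * Real.tanh (conf c x * √(-c) * ‖u‖ * s / 2) ^ 2 := by
  by_cases hu : u = 0
  · simp [hu]
  · have : 0 < ‖u‖ := norm_pos_iff.2 hu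
    rw [norm_smul, norm_smul, mul_pow, mul_pow, norm_inv, norm_mul, norm_norm]
    simp only [Real.norm_eq_abs, sq_abs, inv_pow, mul_pow]
    rw [Real.sq_sqrt (by linarith)]
    have : -c ≠ 0 := by linarith
    field_simp

lemma aux_curve {p : ℕ} {c : ℝ} (hc : c < 0) (x y u : EuclideanSpace ℝ (Fin p))
    (hx : -c * ‖x‖ ^ 2 < 1) (hy : -c * ‖y‖ ^ 2 < 1) :
    ∃ A B : ℝ, ∀ s : ℝ, -c * ‖expMap c x (s • u)‖ ^ 2 < 1 ∧
      auxC c (expMap c x (s • u)) y = A * Real.cosh (conf c x * √(-c) * ‖u‖ * s)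
        + B * Real.sinh (conf c x * √(-c) * ‖u‖ * s) := by
  set v := (√(-c) * ‖u‖)⁻¹ • u with hv
  refine ⟨((1 - c * ‖x‖ ^ 2) * (1 - c * ‖y‖ ^ 2) + 4 * c * ⟪x, y⟫_ℝ) /
    ((1 + c * ‖x‖ ^ 2) * (1 + c * ‖y‖ ^ 2)),
    (-2 * c * (1 - c * ‖y‖ ^ 2) * ⟪x, v⟫_ℝ - 4 * c ^ 2 * ⟪x, v⟫_ℝ * ⟪x, y⟫_ℝ
      + 2 * c * (1 + c * ‖x‖ ^ 2) * ⟪v, y⟫_ℝ) /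
    ((1 + c * ‖x‖ ^ 2) * (1 + c * ‖y‖ ^ 2)), fun s => ?_⟩
  rw [aux_exp x u s]
  have hW := aux_kw hc x u s
  rw [← hv] at hW ⊢
  obtain ⟨θ, hθ⟩ : ∃ θ, θ = conf c x * √(-c) * ‖u‖ * s / 2 := ⟨_, rfl⟩
  have hθ2 : conf c x * √(-c) * ‖u‖ * s = 2 * θ := by rw [hθ]; ring
  rw [← hθ] at hW ⊢
  rw [hθ2]
  have hch : 0 < Real.cosh θ := Real.cosh_pos θ
  have hcs := Real.cosh_sq θ
  obtain ⟨T, hT⟩ : ∃ T, T = Real.tanh θ := ⟨_, rfl⟩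
  rw [← hT] at hW ⊢
  have hT1 : 1 - T ^ 2 = (Real.cosh θ ^ 2)⁻¹ := by
    rw [hT, Real.tanh_eq_sinh_div_cosh]
    field_simp
    linarith
  have hTpos : 0 < 1 - T ^ 2 := by rw [hT1]; positivity
  have hC : Real.cosh (2 * θ) = (1 + T ^ 2) / (1 - T ^ 2) := by
    rw [hT1, Real.cosh_two_mul, hT, Real.tanh_eq_sinh_div_cosh]
    field_simp
  have hS : Real.sinh (2 * θ) = 2 * T / (1 - T ^ 2) := by
    rw [hT1, Real.sinh_two_mul, hT, Real.tanh_eq_sinh_div_cosh]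
    field_simp
  have hcW : c * ‖T • v‖ ^ 2 = - T ^ 2 := by
    rw [hW]
    have : c ≠ 0 := by linarith
    field_simp
  have h1 : 0 < 1 + c * ‖x‖ ^ 2 := by linarith
  have h2 : 0 < 1 + c * ‖y‖ ^ 2 := by linarith
  have hN := aux_N_pos hc x (T • v) hx (by linarith)
  have hM := aux_norm_mobius x (T • v) hN
  have hI := aux_inner_mobius (c := c) x (T • v) y
  have hw2 : c ^ 2 * ‖x‖ ^ 2 * ‖T • v‖ ^ 2 = c * ‖x‖ ^ 2 * (- T ^ 2) := by
    rw [← hcW]; ring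
  have hcM : c * ‖mobiusAdd c x (T • v)‖ ^ 2 = (c * ‖x‖ ^ 2 + 2 * c * (T * ⟪x, v⟫_ℝ) - T ^ 2) /
      (1 - 2 * c * (T * ⟪x, v⟫_ℝ) + c * ‖x‖ ^ 2 * (- T ^ 2)) := by
    rw [hM, hw2, real_inner_smul_right, mul_div_assoc']
    congr 1
    linear_combination hcW
  rw [hw2, hcW, real_inner_smul_right, real_inner_smul_left] at hI
  rw [hw2, real_inner_smul_right] at hN
  have hP : 1 + c * ‖mobiusAdd c x (T • v)‖ ^ 2 = (1 + c * ‖x‖ ^ 2) * (1 - T ^ 2) /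
      (1 - 2 * c * (T * ⟪x, v⟫_ℝ) + c * ‖x‖ ^ 2 * (- T ^ 2)) := by
    rw [hcM, eq_div_iff hN.ne', add_mul, div_mul_cancel₀ _ hN.ne']
    ring
  have hQ : 1 - c * ‖mobiusAdd c x (T • v)‖ ^ 2 =
      ((1 - c * ‖x‖ ^ 2) * (1 + T ^ 2) - 4 * c * (T * ⟪x, v⟫_ℝ)) /
      (1 - 2 * c * (T * ⟪x, v⟫_ℝ) + c * ‖x‖ ^ 2 * (- T ^ 2)) := by
    rw [hcM, eq_div_iff hN.ne', sub_mul, div_mul_cancel₀ _ hN.ne']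
    ring
  constructor
  · have : 0 < 1 + c * ‖mobiusAdd c x (T • v)‖ ^ 2 := by rw [hP]; positivity
    linarith
  · unfold auxC
    rw [hP, hQ, hI, hC, hS]
    generalize 1 - 2 * c * (T * ⟪x, v⟫_ℝ) + c * ‖x‖ ^ 2 * (- T ^ 2) = N at *
    field_simp
    ring

lemma aux_sinh_le {D : ℝ} (hD : 0 ≤ D) : Real.sinh D ≤ D * Real.cosh D := by
  have hmono : MonotoneOn (fun z : ℝ => z * Real.cosh z - Real.sinh z) (Set.Ici 0) := by
    have hd : ∀ z : ℝ, HasDerivAt (fun z : ℝ => z * Real.cosh z - Real.sinh z)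
        (z * Real.sinh z) z := fun z => by
      have := ((hasDerivAt_id z).mul (Real.hasDerivAt_cosh z)).sub (Real.hasDerivAt_sinh z)
      refine this.congr_deriv ?_
      simp only [id]
      ring
    apply monotoneOn_of_deriv_nonneg (convex_Ici 0)
    · exact fun z _ => (hd z).continuousAt.continuousWithinAt
    · exact fun z _ => (hd z).differentiableAt.differentiableWithinAt
    · intro z hz
      rw [interior_Ici] at hz
      rw [(hd z).deriv]
      exact mul_nonneg (le_of_lt hz) (Real.sinh_nonneg_iff.2 (le_of_lt hz))
  have := hmono (Set.mem_Ici.2 le_rfl) (Set.mem_Ici.2 hD) hD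
  simp at this
  linarith

lemma aux_core (A B ω t : ℝ) (ht : 1 < A * Real.cosh (ω * t) + B * Real.sinh (ω * t)) :
    let f := fun s => Real.arcosh (A * Real.cosh (ω * s) + B * Real.sinh (ω * s)) ^ 2
    let D := Real.arcosh (A * Real.cosh (ω * t) + B * Real.sinh (ω * t))
    DifferentiableAt ℝ f t ∧ DifferentiableAt ℝ (deriv f) t ∧
      deriv (deriv f) t ≤ 2 * (D * (Real.cosh D / Real.sinh D)) * ω ^ 2 := by
  intro f D
  set C := fun s => A * Real.cosh (ω * s) + B * Real.sinh (ω * s) with hCdef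
  set E := fun s => ω * (A * Real.sinh (ω * s) + B * Real.cosh (ω * s)) with hEdef
  have hlin : ∀ s, HasDerivAt (fun s => ω * s) ω s := fun s => by
    simpa using (hasDerivAt_id s).const_mul ω
  have hC : ∀ s, HasDerivAt C (E s) s := fun s => by
    have := ((hlin s).cosh.const_mul A).add ((hlin s).sinh.const_mul B)
    refine this.congr_deriv ?_
    simp only [hEdef]; ring
  have hE : ∀ s, HasDerivAt E (ω ^ 2 * C s) s := fun s => by
    have := (((hlin s).sinh.const_mul A).add ((hlin s).cosh.const_mul B)).const_mul ω
    refine this.congr_deriv ?_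
    simp only [hCdef]; ring
  have hD : ∀ s, 1 < C s → HasDerivAt (fun s => Real.arcosh (C s))
      ((Real.sinh (Real.arcosh (C s)))⁻¹ * E s) s := fun s hs => by
    have := (Real.hasDerivAt_arcosh (Set.mem_Ioi.2 hs)).comp s (hC s)
    rw [Real.sinh_arcosh hs.le]
    exact this
  have hf : ∀ s, 1 < C s → HasDerivAt f
      (2 * Real.arcosh (C s) * ((Real.sinh (Real.arcosh (C s)))⁻¹ * E s)) s := fun s hs => by
    refine ((hD s hs).pow 2).congr_deriv ?_
    simp
  have hev : ∀ᶠ s in nhds t, 1 < C s :=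
    (hC t).continuousAt.eventually (lt_mem_nhds ht)
  have hdf : deriv f =ᶠ[nhds t]
      fun s => 2 * Real.arcosh (C s) * ((Real.sinh (Real.arcosh (C s)))⁻¹ * E s) :=
    hev.mono fun s hs => (hf s hs).deriv
  have hDpos : 0 < D := Real.arcosh_pos ht
  have hSpos : 0 < Real.sinh D := Real.sinh_pos_iff.2 hDpos
  have hcosh : Real.cosh D = C t := Real.cosh_arcosh ht.le
  have h2 := ((hD t ht).const_mul 2).mul (((hD t ht).sinh.inv hSpos.ne').mul (hE t))
  have h3 := h2.congr_of_eventuallyEq hdf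
  refine ⟨(hf t ht).differentiableAt, h3.differentiableAt, ?_⟩
  rw [h3.deriv]
  change 2 * ((Real.sinh D)⁻¹ * E t) * ((Real.sinh D)⁻¹ * E t) + 2 * D *
    (-(Real.cosh D * ((Real.sinh D)⁻¹ * E t)) / Real.sinh D ^ 2 * E t +
      (Real.sinh D)⁻¹ * (ω ^ 2 * C t)) ≤ _
  rw [← hcosh]
  have hle := aux_sinh_le hDpos.le
  have key : 2 * (D * (Real.cosh D / Real.sinh D)) * ω ^ 2 -
    (2 * ((Real.sinh D)⁻¹ * E t) * ((Real.sinh D)⁻¹ * E t) + 2 * D *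
    (-(Real.cosh D * ((Real.sinh D)⁻¹ * E t)) / Real.sinh D ^ 2 * E t +
      (Real.sinh D)⁻¹ * (ω ^ 2 * Real.cosh D))) =
      2 * (D * Real.cosh D - Real.sinh D) * E t ^ 2 / Real.sinh D ^ 3 := by
    field_simp
    ring
  have : 0 ≤ 2 * (D * Real.cosh D - Real.sinh D) * E t ^ 2 / Real.sinh D ^ 3 :=
    div_nonneg (mul_nonneg (by linarith) (sq_nonneg _)) (by positivity)
  linarith

/-- Hessian comparison along geodesics.  Fix `c < 0`, `x, y ∈ D_c^p`
with `y ≠ x`, and `u ∈ ℝ^p`; let `γ(t) = exp_x(tu)` and `ψ(t) = ½ d_H(γ(t), y)²`.  Then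
at every `t` with `γ(t) ≠ y`, `ψ` is twice differentiable and
`ψ''(t) ≤ g_c(d_H(γ(t), y)) ‖u‖_{g,x}²`, where `g_c(s) = √κ s coth(√κ s)` (`g_c(0)=1`),
`κ = −c`, and `‖u‖_{g,x} = (2/(1 − κ‖x‖²))‖u‖`. -/
theorem squared_distance_second_derivative_bound
    (p : ℕ) (c : ℝ) (hc : c < 0)
    (x y : EuclideanSpace ℝ (Fin p)) (hx : x ∈ Dball c p) (hy : y ∈ Dball c p)
    (hxy : y ≠ x) (u : EuclideanSpace ℝ (Fin p)) :
    ∀ t : ℝ, expMap c x (t • u) ≠ y →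
      DifferentiableAt ℝ (fun s => (1 / 2) * dH c (expMap c x (s • u)) y ^ 2) t ∧
      DifferentiableAt ℝ
        (deriv (fun s => (1 / 2) * dH c (expMap c x (s • u)) y ^ 2)) t ∧
      deriv (deriv (fun s => (1 / 2) * dH c (expMap c x (s • u)) y ^ 2)) t ≤
        gcomp c (dH c (expMap c x (t • u)) y) * (conf c x * ‖u‖) ^ 2 := by
  intro t hne
  have hx' : -c * ‖x‖ ^ 2 < 1 := hx
  have hy' : -c * ‖y‖ ^ 2 < 1 := hy
  have hk : 0 < √(-c) := Real.sqrt_pos.2 (by linarith)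
  have hk2 : √(-c) ^ 2 = -c := Real.sq_sqrt (by linarith)
  obtain ⟨A, B, hAB⟩ := aux_curve hc x y u hx' hy'
  have hfun : (fun s => (1 / 2) * dH c (expMap c x (s • u)) y ^ 2) =
      fun s => (1 / 2 * (√(-c))⁻¹ ^ 2) *
        Real.arcosh (A * Real.cosh (conf c x * √(-c) * ‖u‖ * s)
          + B * Real.sinh (conf c x * √(-c) * ‖u‖ * s)) ^ 2 := by
    funext s
    rw [aux_dH hc _ y (hAB s).1 hy', (hAB s).2]
    ring
  have ht := auxC_one_lt hc _ y (hAB t).1 hy' hne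
  have hdt := aux_dH hc _ y (hAB t).1 hy'
  rw [(hAB t).2] at ht hdt
  obtain ⟨h1, h2, h3⟩ := aux_core A B _ t ht
  rw [hfun]
  have hd : deriv (fun s => (1 / 2 * (√(-c))⁻¹ ^ 2) *
        Real.arcosh (A * Real.cosh (conf c x * √(-c) * ‖u‖ * s)
          + B * Real.sinh (conf c x * √(-c) * ‖u‖ * s)) ^ 2) =
      fun s => (1 / 2 * (√(-c))⁻¹ ^ 2) * deriv (fun s =>
        Real.arcosh (A * Real.cosh (conf c x * √(-c) * ‖u‖ * s)
          + B * Real.sinh (conf c x * √(-c) * ‖u‖ * s)) ^ 2) s := by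
    funext s
    exact deriv_const_mul_field _
  refine ⟨h1.const_mul _, ?_, ?_⟩
  · rw [hd]
    exact h2.const_mul _
  · rw [hd, deriv_const_mul_field, hdt]
    have hDpos := Real.arcosh_pos ht
    generalize Real.arcosh (A * Real.cosh (conf c x * √(-c) * ‖u‖ * t)
          + B * Real.sinh (conf c x * √(-c) * ‖u‖ * t)) = D at *
    unfold gcomp
    rw [if_neg (by positivity), mul_inv_cancel_left₀ hk.ne']
    refine (mul_le_mul_of_nonneg_left h3 (by positivity)).trans (le_of_eq ?_)
    field_simp
end
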